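/- Let p be a prime and let (a_n)_{n≥0} be a sequence in ℚ_p such that ‖a_n‖_p → 0 as n → ∞, but for every real r > 1 it is NOT the case that ‖a_n‖_p · r^n → 0 as n → ∞ (equivalently, v_p(a_n) → ∞ but liminf_n v_p(a_n)/n = 0). Then the power series s = Σ_{n≥0} a_n x^n ∈ ℚ_p[[x]] is transcendental over ℚ_p(x): for every nonzero polynomial F ∈ ℚ_p[X,Y], one has F(x, s(x)) ≠ 0 in ℚ_p[[x]]. -/

import Mathlib

open Filter PowerSeries

/-!
Let `s` be a root of `F ∈ K[X][Y]` with `F'(s) ≠ 0`. Truncating, `s = t + u` where `t` is a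
polynomial and `u` has small coefficients; then `u` is a root of the Taylor shift `P` of `F` at
`t`, and `P₁ u = -(P₀ + Q(u) u²)` with `P₁` not small. Let `m` be the last index at which the
coefficients of `P₁` have maximal norm `δ`, and take `r > 1` so close to `1` that `m` also dominates
`P₁` for the weight `rⁿ`. For submultiplicative weights no larger than this one, multiplication
by `P₁` expands weighted sup norms by at least `δ`. Since `Q(u) u²` is quadratic in the small series
`u`, the equation improves every bound on `u` that exceeds the target by at most a factor `r`.
The weights `r ^ min n k` see only a restricted series tending to `0`, and passing from `k` to
`k + 1` loses exactly such a factor; so one bound holds for all `k`, and `u` converges on a larger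
disk. If `F'(s) = 0`, replace `F` by `F'`; if `F' = 0`, then `F` is a polynomial in `Yᵖ`, `p` the
characteristic, and `s` is replaced by `sᵖ`.
-/

open scoped Polynomial Topology

section CommRing

variable {R : Type*} [CommRing R]

lemma algebraMap_polynomial_apply (f : R[X]) : algebraMap R[X] R⟦X⟧ f = f := by
  simp [algebraMap_apply']

lemma coeff_algebraMap_polynomial (f : R[X]) (n : ℕ) :
    coeff n (algebraMap R[X] R⟦X⟧ f) = f.coeff n := by
  rw [algebraMap_polynomial_apply, Polynomial.coeff_coe]

lemma coeff_coeff_taylor_map_algebraMap (F : R[X][X]) (t : R[X]) (k l : ℕ) :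
    coeff l ((Polynomial.taylor (t : R⟦X⟧) (F.map (algebraMap R[X] R⟦X⟧))).coeff k) =
      ((Polynomial.taylor t F).coeff k).coeff l := by
  rw [← algebraMap_polynomial_apply, ← Polynomial.map_taylor, Polynomial.coeff_map,
    coeff_algebraMap_polynomial]

lemma eval_eq_divX_divX (P : R[X]) (u : R) :
    P.eval u = P.coeff 0 + P.coeff 1 * u + P.divX.divX.eval u * u ^ 2 := by
  conv_lhs => rw [← P.divX_mul_X_add, ← P.divX.divX_mul_X_add]
  simp only [Polynomial.eval_add, Polynomial.eval_mul, Polynomial.eval_X, Polynomial.eval_C,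
    Polynomial.coeff_divX]
  ring

lemma coeff_mul_pow_expChar (p : ℕ) [ExpChar R p] (f : R⟦X⟧) (n : ℕ) :
    coeff (p * n) (f ^ p) = coeff n f ^ p := by
  have hp : p ≠ 0 := (expChar_pos R p).ne'
  have hfrob : PowerSeries.map (frobenius R p) (PowerSeries.expand p hp f) = f ^ p :=
    MvPowerSeries.map_frobenius_expand p hp
  rw [← hfrob, coeff_map, coeff_expand_mul, frobenius_def]

lemma natDegree_contract_lt_of_derivative_eq_zero [IsDomain R] (p : ℕ)
    [hp : ExpChar R p] {F : R[X]} (hF : F.natDegree ≠ 0) (hF' : F.derivative = 0) :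
    (F.contract p).natDegree < F.natDegree := by
  have hdeg : F.natDegree = (F.contract p).natDegree * p := by
    rw [← Polynomial.natDegree_expand, Polynomial.expand_contract' p hF']
  cases hp with
  | zero => exact absurd (Polynomial.derivative_eq_zero.1 hF') hF
  | prime hprime =>
    rw [hdeg] at hF ⊢
    exact lt_mul_of_one_lt_right (Nat.pos_of_ne_zero (left_ne_zero_of_mul hF)) hprime.one_lt

end CommRing

lemma exists_last_max {v : ℕ → ℝ} (hv : Tendsto v atTop (𝓝 0)) {n₀ : ℕ} (hn₀ : 0 < v n₀) :
    ∃ n, (∀ j, v j ≤ v n) ∧ ∀ j, n < j → v j < v n := by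
  have hfin : {j | v n₀ ≤ v j}.Finite := by
    have hlt := hv.eventually_lt_const hn₀
    rw [← Nat.cofinite_eq_atTop] at hlt
    simpa only [not_lt] using eventually_cofinite.1 hlt
  obtain ⟨n, hn, hmax⟩ := Set.exists_max_image _ (fun j => toLex (v j, j)) hfin ⟨n₀, le_refl (v n₀)⟩
  have hn : v n₀ ≤ v n := hn
  have hcases (j : ℕ) : v j < v n ∨ v j = v n ∧ j ≤ n := by
    by_cases hj : v n₀ ≤ v j
    · exact Prod.Lex.toLex_le_toLex.1 (hmax j hj)
    · exact .inl ((not_le.1 hj).trans_le hn)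
  exact ⟨n, by grind, by grind⟩

/-- Submultiplicative nondecreasing weights: those for which weighted sup norms of power series over
an ultrametric ring are submultiplicative. -/
structure IsWeight (w : ℕ → ℝ) : Prop where
  map_zero : w 0 = 1
  monotone : Monotone w
  map_add_le_mul : ∀ i j, w (i + j) ≤ w i * w j

namespace IsWeight

variable {w : ℕ → ℝ}

lemma one_le (hw : IsWeight w) (n : ℕ) : 1 ≤ w n :=
  hw.map_zero ▸ hw.monotone n.zero_le

lemma pos (hw : IsWeight w) (n : ℕ) : 0 < w n :=
  one_pos.trans_le (hw.one_le n)

end IsWeight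

lemma isWeight_one : IsWeight 1 where
  map_zero := rfl
  monotone := monotone_const
  map_add_le_mul _ _ := by simp

/-- The geometric weight `r ^ n`, constant from the index `k` on. Unlike `r ^ n` it is bounded, so
that restricted power series tend to zero against it. -/
def cappedPow (r : ℝ) (k n : ℕ) : ℝ := r ^ min n k

lemma isWeight_cappedPow {r : ℝ} (hr : 1 ≤ r) (k : ℕ) : IsWeight (cappedPow r k) where
  map_zero := by simp [cappedPow]
  monotone _ _ hij := pow_le_pow_right₀ hr (min_le_min_right k hij)
  map_add_le_mul i j := by
    simp only [cappedPow, ← pow_add]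
    exact pow_le_pow_right₀ hr (by omega)

lemma cappedPow_le_pow {r : ℝ} (hr : 1 ≤ r) (k n : ℕ) : cappedPow r k n ≤ r ^ n :=
  pow_le_pow_right₀ hr (min_le_left n k)

lemma cappedPow_le_pow_cap {r : ℝ} (hr : 1 ≤ r) (k n : ℕ) : cappedPow r k n ≤ r ^ k :=
  pow_le_pow_right₀ hr (min_le_right n k)

lemma cappedPow_succ_le {r : ℝ} (hr : 1 ≤ r) (k n : ℕ) :
    cappedPow r (k + 1) n ≤ cappedPow r k n * r := by
  simp only [cappedPow, ← pow_succ]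
  exact pow_le_pow_right₀ hr (by omega)

/-- The sup norm of `f` for the weight `w` is at most `C`. -/
def CoeffsBoundedBy {R : Type*} [NormedRing R] (w : ℕ → ℝ) (C : ℝ) (f : R⟦X⟧) : Prop :=
  ∀ n, ‖coeff n f‖ * w n ≤ C

namespace CoeffsBoundedBy

section NormedRing

variable {R : Type*} [NormedRing R] {w : ℕ → ℝ} {C D : ℝ} {f g : R⟦X⟧}

lemma mono (hf : CoeffsBoundedBy w C f) (hCD : C ≤ D) : CoeffsBoundedBy w D f :=
  fun n => (hf n).trans hCD

lemma of_weight_le {v : ℕ → ℝ} (hf : CoeffsBoundedBy w C f) (hvw : ∀ n, v n ≤ w n) :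
    CoeffsBoundedBy v C f :=
  fun n => (mul_le_mul_of_nonneg_left (hvw n) (norm_nonneg _)).trans (hf n)

lemma nonneg (hw : IsWeight w) (hf : CoeffsBoundedBy w C f) : 0 ≤ C :=
  (mul_nonneg (norm_nonneg _) (hw.pos 0).le).trans (hf 0)

lemma neg (hf : CoeffsBoundedBy w C f) : CoeffsBoundedBy w C (-f) := fun n => by
  simpa only [map_neg, norm_neg] using hf n

lemma one [NormOneClass R] (hw : IsWeight w) : CoeffsBoundedBy w 1 (1 : R⟦X⟧) := fun n => by
  rcases eq_or_ne n 0 with rfl | hn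
  · simp [hw.map_zero]
  · simp [coeff_one, hn]

lemma isRestricted {r c : ℝ} (hc : 0 ≤ c) (hcr : c < r)
    (hf : CoeffsBoundedBy (r ^ ·) C f) : f.IsRestricted c := by
  have hr : 0 < r := hc.trans_lt hcr
  have hgeom : Tendsto (fun n => C * (c / r) ^ n) atTop (𝓝 0) := by
    simpa using (tendsto_pow_atTop_nhds_zero_of_lt_one (div_nonneg hc hr.le)
      ((div_lt_one hr).2 hcr)).const_mul C
  refine (isRestricted_iff' c f).2 (squeeze_zero (fun n => by positivity) (fun n => ?_) hgeom)
  calc ‖coeff n f‖ * c ^ n = ‖coeff n f‖ * r ^ n * (c / r) ^ n := by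
        rw [div_pow, mul_assoc, mul_div_cancel₀ _ (pow_pos hr n).ne']
    _ ≤ C * (c / r) ^ n := by
      gcongr
      exact hf n

variable [IsUltrametricDist R]

lemma add (hw : IsWeight w) (hf : CoeffsBoundedBy w C f) (hg : CoeffsBoundedBy w C g) :
    CoeffsBoundedBy w C (f + g) := fun n => by
  rw [← le_div_iff₀ (hw.pos n), map_add]
  exact (IsUltrametricDist.norm_add_le_max _ _).trans
    (max_le ((le_div_iff₀ (hw.pos n)).2 (hf n)) ((le_div_iff₀ (hw.pos n)).2 (hg n)))

lemma sum {ι : Type*} {s : Finset ι} {f : ι → R⟦X⟧} (hw : IsWeight w) (hC : 0 ≤ C)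
    (hf : ∀ i ∈ s, CoeffsBoundedBy w C (f i)) : CoeffsBoundedBy w C (∑ i ∈ s, f i) := fun n => by
  rw [← le_div_iff₀ (hw.pos n), map_sum]
  exact IsUltrametricDist.norm_sum_le_of_forall_le_of_nonneg (div_nonneg hC (hw.pos n).le)
    fun i hi => (le_div_iff₀ (hw.pos n)).2 (hf i hi n)

lemma mul (hw : IsWeight w) (hf : CoeffsBoundedBy w C f) (hg : CoeffsBoundedBy w D g) :
    CoeffsBoundedBy w (C * D) (f * g) := fun n => by
  have hCD : 0 ≤ C * D := mul_nonneg (hf.nonneg hw) (hg.nonneg hw)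
  rw [← le_div_iff₀ (hw.pos n), coeff_mul]
  refine IsUltrametricDist.norm_sum_le_of_forall_le_of_nonneg (div_nonneg hCD (hw.pos n).le) ?_
  rintro ⟨i, j⟩ hij
  obtain rfl : i + j = n := Finset.HasAntidiagonal.mem_antidiagonal.1 hij
  rw [le_div_iff₀ (hw.pos _)]
  calc ‖coeff i f * coeff j g‖ * w (i + j)
      ≤ ‖coeff i f‖ * ‖coeff j g‖ * (w i * w j) :=
        mul_le_mul (norm_mul_le _ _) (hw.map_add_le_mul i j) (hw.pos _).le (by positivity)
    _ = ‖coeff i f‖ * w i * (‖coeff j g‖ * w j) := mul_mul_mul_comm ..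
    _ ≤ C * D := mul_le_mul (hf i) (hg j) (mul_nonneg (norm_nonneg _) (hw.pos j).le)
        (hf.nonneg hw)

variable [NormOneClass R]

lemma pow (hw : IsWeight w) (hf : CoeffsBoundedBy w C f) (j : ℕ) :
    CoeffsBoundedBy w (C ^ j) (f ^ j) := by
  induction j with
  | zero => simpa only [pow_zero] using one hw
  | succ j ih => simpa only [pow_succ] using ih.mul hw hf

lemma nsmul (hw : IsWeight w) (hf : CoeffsBoundedBy w C f) (m : ℕ) :
    CoeffsBoundedBy w C (m • f) := fun n => by
  refine le_trans (mul_le_mul_of_nonneg_right ?_ (hw.pos n).le) (hf n)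
  rw [map_nsmul, nsmul_eq_mul]
  exact (norm_mul_le _ _).trans
    (mul_le_of_le_one_left (norm_nonneg _) (IsUltrametricDist.norm_natCast_le_one R m))

end NormedRing

section NormedCommRing

variable {R : Type*} [NormedCommRing R] [IsUltrametricDist R] [NormOneClass R] {w : ℕ → ℝ}
  {A B C D : ℝ} {f g : R⟦X⟧} {P : R⟦X⟧[X]}

lemma hasseDeriv (hw : IsWeight w) (hP : ∀ k, CoeffsBoundedBy w B (P.coeff k)) (j k : ℕ) :
    CoeffsBoundedBy w B ((Polynomial.hasseDeriv j P).coeff k) := by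
  rw [Polynomial.hasseDeriv_coeff, ← nsmul_eq_mul]
  exact (hP _).nsmul hw _

lemma eval (hw : IsWeight w) (hP : ∀ k, CoeffsBoundedBy w B (P.coeff k))
    (hf : CoeffsBoundedBy w C f) (hC : 1 ≤ C) :
    CoeffsBoundedBy w (B * C ^ P.natDegree) (P.eval f) := by
  have hB := (hP 0).nonneg hw
  rw [Polynomial.eval_eq_sum_range]
  refine sum hw (by positivity) fun k hk => ((hP k).mul hw (hf.pow hw k)).mono ?_
  gcongr
  exact Finset.mem_range_succ_iff.1 hk

lemma eval_of_le_one (hw : IsWeight w) (hP : ∀ k, CoeffsBoundedBy w B (P.coeff k))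
    (hf : CoeffsBoundedBy w C f) (hC : C ≤ 1) : CoeffsBoundedBy w B (P.eval f) := by
  simpa only [one_pow, mul_one] using (hf.mono hC).eval hw hP le_rfl

lemma taylor (hw : IsWeight w) (hP : ∀ k, CoeffsBoundedBy w B (P.coeff k))
    (hf : CoeffsBoundedBy w C f) (hC : 1 ≤ C) (k : ℕ) :
    CoeffsBoundedBy w (B * C ^ P.natDegree) ((Polynomial.taylor f P).coeff k) := by
  rw [Polynomial.taylor_coeff]
  refine (hf.eval hw (hasseDeriv hw hP k) hC).mono ?_
  have hB := (hP 0).nonneg hw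
  gcongr
  exact (P.natDegree_hasseDeriv_le k).trans (Nat.sub_le _ _)

lemma eval_add_sub_eval (hw : IsWeight w) (hP : ∀ k, CoeffsBoundedBy w B (P.coeff k))
    (hf : CoeffsBoundedBy w C f) (hC : 1 ≤ C)
    (hg : CoeffsBoundedBy w D g) (hD : D ≤ 1) :
    CoeffsBoundedBy w (B * C ^ P.natDegree * D) (P.eval (f + g) - P.eval f) := by
  have hdiff : P.eval (f + g) - P.eval f = (Polynomial.taylor f P).divX.eval g * g := by
    rw [add_comm, ← Polynomial.taylor_eval, ← Polynomial.taylor_coeff_zero f P, sub_eq_iff_eq_add]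
    simpa using (congrArg (Polynomial.eval g) (Polynomial.taylor f P).divX_mul_X_add).symm
  rw [hdiff]
  refine (hg.eval_of_le_one hw (fun k => ?_) hD).mul hw hg
  simpa only [Polynomial.coeff_divX] using hf.taylor hw hP hC (k + 1)

lemma lt_norm_coeff_eval_derivative {i : ℕ} (hP : ∀ k, CoeffsBoundedBy 1 B (P.coeff k))
    (hf : CoeffsBoundedBy 1 C f)
    (hC : 1 ≤ C) (hg : CoeffsBoundedBy 1 D g) (hD : D ≤ 1) (hA : B * C ^ P.natDegree * D ≤ A)
    (hi : A < ‖coeff i (P.derivative.eval (f + g))‖) : A < ‖coeff i (P.derivative.eval f)‖ := by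
  have hB := (hP 0).nonneg isWeight_one
  have hD0 := hg.nonneg isWeight_one
  have hderiv (k : ℕ) : CoeffsBoundedBy 1 B (P.derivative.coeff k) := by
    simpa only [Polynomial.hasseDeriv_one] using hasseDeriv isWeight_one hP 1 k
  have hdiff : CoeffsBoundedBy 1 A (P.derivative.eval (f + g) - P.derivative.eval f) := by
    refine (eval_add_sub_eval isWeight_one hderiv hf hC hg hD).mono (.trans ?_ hA)
    gcongr
    exact P.natDegree_derivative_le.trans (Nat.sub_le _ 1)
  by_contra! hle
  refine hi.not_ge ?_
  rw [← sub_add_cancel (P.derivative.eval (f + g)) (P.derivative.eval f), map_add]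
  exact (IsUltrametricDist.norm_add_le_max _ _).trans (max_le (by simpa using hdiff i) hle)

lemma coeff_zero_of_eval_eq_zero (hw : IsWeight w) {u : R⟦X⟧} (hPu : P.eval u = 0)
    (hP1 : CoeffsBoundedBy w A (P.coeff 1))
    (hP2 : ∀ k, CoeffsBoundedBy w B (P.coeff (k + 2))) (hu : CoeffsBoundedBy w C u) (hC : C ≤ 1)
    (hBC : B * C ≤ A) : CoeffsBoundedBy w (A * C) (P.coeff 0) := by
  have hconst : P.coeff 0 = -(P.coeff 1 * u + P.divX.divX.eval u * u ^ 2) := by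
    linear_combination (eval_eq_divX_divX P u).symm.trans hPu
  rw [hconst]
  have hquad : CoeffsBoundedBy w (B * C ^ 2) (P.divX.divX.eval u * u ^ 2) :=
    (hu.eval_of_le_one hw (fun k => by simpa only [Polynomial.coeff_divX] using hP2 k) hC).mul
      hw (hu.pow hw 2)
  refine ((hP1.mul hw hu).add hw (hquad.mono ?_)).neg
  calc B * C ^ 2 = B * C * C := by ring
    _ ≤ A * C := mul_le_mul_of_nonneg_right hBC (hu.nonneg hw)

end NormedCommRing

end CoeffsBoundedBy

section NormedRing

variable {R : Type*} [NormedRing R]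

lemma isRestricted_coe_polynomial (c : ℝ) (f : R[X]) : (f : R⟦X⟧).IsRestricted c := by
  refine (isRestricted_iff' c _).2 (tendsto_const_nhds.congr' ?_)
  filter_upwards [eventually_gt_atTop f.natDegree] with n hn
  simp [Polynomial.coeff_eq_zero_of_natDegree_lt hn]

lemma exists_coeffsBoundedBy_one {f : R⟦X⟧} (hf : f.IsRestricted 1) :
    ∃ C ≥ 1, CoeffsBoundedBy 1 C f := by
  obtain ⟨C, hC⟩ := ((isRestricted_iff' 1 f).1 hf).bddAbove_range
  refine ⟨max 1 C, le_max_left 1 C, fun n => le_max_of_le_right ?_⟩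
  simpa using hC (Set.mem_range_self n)

lemma exists_polynomial_coeffsBoundedBy_sub {f : R⟦X⟧} (hf : f.IsRestricted 1) {ε : ℝ}
    (hε : 0 < ε) : ∃ t : R[X], CoeffsBoundedBy 1 ε (f - (t : R⟦X⟧)) := by
  obtain ⟨N, hN⟩ := eventually_atTop.1 (((isRestricted_iff' 1 f).1 hf).eventually_le_const hε)
  refine ⟨trunc N f, fun n => ?_⟩
  rcases lt_or_ge n N with hn | hn
  · simpa [coeff_trunc, hn] using hε.le
  · simpa [coeff_trunc, hn.not_gt] using hN n hn

lemma exists_forall_norm_coeff_coeff_le (P : R[X][X]) :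
    ∃ B, ∀ k l, ‖(P.coeff k).coeff l‖ ≤ B := by
  obtain ⟨B, hB⟩ := (P.support.image fun k => (P.coeff k).supNorm).exists_le
  refine ⟨max 0 B, fun k l => ?_⟩
  by_cases hk : k ∈ P.support
  · exact ((P.coeff k).le_supNorm l).trans
      ((hB _ (Finset.mem_image_of_mem _ hk)).trans (le_max_right 0 B))
  · simp [Polynomial.notMem_support_iff.1 hk]

lemma eventually_forall_norm_coeff_mul_pow_lt (f : R[X]) {s : Set ℕ} {b : ℝ}
    (hf : ∀ i ∈ s, ‖f.coeff i‖ < b) :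
    ∀ᶠ r in 𝓝 (1 : ℝ), ∀ i ∈ s, ‖f.coeff i‖ * r ^ i < b := by
  have hsupp : ∀ᶠ r in 𝓝 (1 : ℝ), ∀ i ∈ f.support, i ∈ s → ‖f.coeff i‖ * r ^ i < b := by
    refine (eventually_all_finset _).2 fun i _ => eventually_imp_distrib_left.2 fun his => ?_
    have hcont : Continuous fun r : ℝ => ‖f.coeff i‖ * r ^ i := by fun_prop
    exact hcont.continuousAt.eventually_lt_const (by simpa using hf i his)
  filter_upwards [hsupp] with r hr i his
  by_cases hi : i ∈ f.support
  · exact hr i hi his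
  · have hi : f.coeff i = 0 := Polynomial.notMem_support_iff.1 hi
    simpa [hi] using hf i his

lemma eventually_forall_norm_coeff_coeff_mul_pow_lt {P : R[X][X]} {B : ℝ}
    (hP : ∀ k l, ‖(P.coeff k).coeff l‖ < B) :
    ∀ᶠ r in 𝓝 (1 : ℝ), ∀ k l, ‖(P.coeff k).coeff l‖ * r ^ l < B := by
  have hB : 0 < B := (norm_nonneg _).trans_lt (hP 0 0)
  have hsupp : ∀ᶠ r in 𝓝 (1 : ℝ), ∀ k ∈ P.support, ∀ l ∈ Set.univ,
      ‖(P.coeff k).coeff l‖ * r ^ l < B :=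
    (eventually_all_finset _).2 fun k _ =>
      eventually_forall_norm_coeff_mul_pow_lt _ fun l _ => hP k l
  filter_upwards [hsupp] with r hr k l
  by_cases hk : k ∈ P.support
  · exact hr k hk l (Set.mem_univ l)
  · simpa [Polynomial.notMem_support_iff.1 hk] using hB

end NormedRing

section NormedField

variable {K : Type*} [NormedField K]

lemma isRestricted_of_pow_expChar (p : ℕ) [ExpChar K p] {f : K⟦X⟧} {c : ℝ} (hc : 0 ≤ c)
    (hf : (f ^ p).IsRestricted c) : f.IsRestricted c := by
  have hp : p ≠ 0 := (expChar_pos K p).ne'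
  have hpow : Tendsto (fun n => (‖coeff n f‖ * c ^ n) ^ p) atTop (𝓝 0) := by
    refine (((isRestricted_iff' c _).1 hf).comp (tendsto_id.const_mul_atTop' hp.bot_lt)).congr ?_
    intro n
    simp only [Function.comp_apply, id, coeff_mul_pow_expChar, norm_pow, mul_pow, ← pow_mul,
      mul_comm n p]
  have hroot := hpow.rpow_const (p := (p : ℝ)⁻¹) (.inr (by positivity))
  rw [Real.zero_rpow (by positivity)] at hroot
  exact (isRestricted_iff' c f).2 <| hroot.congr fun n =>
    Real.pow_rpow_inv_natCast (by positivity) hp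

/-- The coefficient of `f` at `m` has the largest norm, and it strictly exceeds all later ones even
after these are multiplied by the weight `w`. -/
structure IsDominantIndex (w : ℕ → ℝ) (f : K⟦X⟧) (m : ℕ) : Prop where
  coeff_ne_zero : coeff m f ≠ 0
  norm_coeff_le : ∀ i, i < m → ‖coeff i f‖ ≤ ‖coeff m f‖
  norm_coeff_mul_lt : ∀ i, m < i → ‖coeff i f‖ * w i < ‖coeff m f‖

variable [IsUltrametricDist K] {w : ℕ → ℝ}

lemma IsDominantIndex.norm_coeff_add_mul (hw : IsWeight w) {f u : K⟦X⟧} {m n : ℕ}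
    (hf : IsDominantIndex w f m) (hn : coeff n u ≠ 0)
    (hle : ∀ j, ‖coeff j u‖ * w j ≤ ‖coeff n u‖ * w n)
    (hlt : ∀ j, n < j → ‖coeff j u‖ * w j < ‖coeff n u‖ * w n) :
    ‖coeff (m + n) (f * u)‖ = ‖coeff m f‖ * ‖coeff n u‖ := by
  have hm_pos : 0 < ‖coeff m f‖ := norm_pos_iff.2 hf.coeff_ne_zero
  have hn_pos : 0 < ‖coeff n u‖ := norm_pos_iff.2 hn
  rw [coeff_mul, IsUltrametricDist.isNonarchimedean_norm.apply_sum_eq_of_lt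
    (fun a => (norm_neg a).symm) (k := (m, n)) (Finset.HasAntidiagonal.mem_antidiagonal.2 rfl),
    norm_mul]
  rintro ⟨i, j⟩ hij hne
  have hij : i + j = m + n := Finset.HasAntidiagonal.mem_antidiagonal.1 hij
  simp only [norm_mul]
  rcases lt_trichotomy i m with hi | rfl | hi
  · have hj : n < j := by omega
    have huj : ‖coeff j u‖ < ‖coeff n u‖ := by
      refine lt_of_mul_lt_mul_right ?_ (hw.pos j).le
      exact (hlt j hj).trans_le (mul_le_mul_of_nonneg_left (hw.monotone hj.le) hn_pos.le)
    exact mul_lt_mul' (hf.norm_coeff_le i hi) huj (norm_nonneg _) hm_pos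
  · obtain rfl : j = n := Nat.add_left_cancel hij
    exact absurd rfl hne
  · have hwn : w n ≤ w i * w j := (hw.monotone (by omega)).trans (hw.map_add_le_mul i j)
    refine lt_of_mul_lt_mul_right ?_ (hw.pos n).le
    calc ‖coeff i f‖ * ‖coeff j u‖ * w n
        ≤ ‖coeff i f‖ * ‖coeff j u‖ * (w i * w j) := by gcongr
      _ = ‖coeff i f‖ * w i * (‖coeff j u‖ * w j) := mul_mul_mul_comm ..
      _ ≤ ‖coeff i f‖ * w i * (‖coeff n u‖ * w n) :=
        mul_le_mul_of_nonneg_left (hle j) (mul_nonneg (norm_nonneg _) (hw.pos i).le)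
      _ < ‖coeff m f‖ * (‖coeff n u‖ * w n) :=
        mul_lt_mul_of_pos_right (hf.norm_coeff_mul_lt i hi) (mul_pos hn_pos (hw.pos n))
      _ = ‖coeff m f‖ * ‖coeff n u‖ * w n := (mul_assoc ..).symm

lemma CoeffsBoundedBy.of_isDominantIndex_mul (hw : IsWeight w) {f u : K⟦X⟧} {m : ℕ} {C : ℝ}
    (hf : IsDominantIndex w f m)
    (hu : Tendsto (fun n => ‖coeff n u‖ * w n) atTop (𝓝 0))
    (hfu : CoeffsBoundedBy w (‖coeff m f‖ * C) (f * u)) : CoeffsBoundedBy w C u := by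
  have hm_pos : 0 < ‖coeff m f‖ := norm_pos_iff.2 hf.coeff_ne_zero
  have hC : 0 ≤ C := nonneg_of_mul_nonneg_right (hfu.nonneg hw) hm_pos
  intro j
  rcases le_or_gt (‖coeff j u‖ * w j) 0 with hj | hj
  · exact hj.trans hC
  obtain ⟨n, hle, hlt⟩ := exists_last_max hu hj
  have hn : coeff n u ≠ 0 :=
    norm_pos_iff.1 (pos_of_mul_pos_left (hj.trans_le (hle j)) (hw.pos n).le)
  refine (hle j).trans (le_of_mul_le_mul_left ?_ hm_pos)
  calc ‖coeff m f‖ * (‖coeff n u‖ * w n) = ‖coeff (m + n) (f * u)‖ * w n := by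
        rw [hf.norm_coeff_add_mul hw hn hle hlt, mul_assoc]
    _ ≤ ‖coeff (m + n) (f * u)‖ * w (m + n) :=
      mul_le_mul_of_nonneg_left (hw.monotone (Nat.le_add_left n m)) (norm_nonneg _)
    _ ≤ ‖coeff m f‖ * C := hfu (m + n)

lemma CoeffsBoundedBy.of_eval_eq_zero (hw : IsWeight w) {P : K⟦X⟧[X]} {u : K⟦X⟧} {m : ℕ}
    {B C D : ℝ} (hPu : P.eval u = 0) (hu : Tendsto (fun n => ‖coeff n u‖ * w n) atTop (𝓝 0))
    (hP1 : IsDominantIndex w (P.coeff 1) m)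
    (hP0 : CoeffsBoundedBy w (‖coeff m (P.coeff 1)‖ * C) (P.coeff 0))
    (hP2 : ∀ k, CoeffsBoundedBy w B (P.coeff (k + 2)))
    (huD : CoeffsBoundedBy w D u) (hD : D ≤ 1) (hBD : B * D ^ 2 ≤ ‖coeff m (P.coeff 1)‖ * C) :
    CoeffsBoundedBy w C u := by
  refine .of_isDominantIndex_mul hw hP1 hu ?_
  have hlin : P.coeff 1 * u = -(P.coeff 0 + P.divX.divX.eval u * u ^ 2) := by
    linear_combination (eval_eq_divX_divX P u).symm.trans hPu
  rw [hlin]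
  refine (hP0.add hw (.mono ?_ hBD)).neg
  exact (huD.eval_of_le_one hw (fun k => by simpa only [Polynomial.coeff_divX] using hP2 k) hD).mul
    hw (huD.pow hw 2)

lemma CoeffsBoundedBy.geometric_of_eval_eq_zero {P : K⟦X⟧[X]} {u : K⟦X⟧} {m : ℕ} {B C r : ℝ}
    (hr : 1 ≤ r) (hPu : P.eval u = 0) (hu : u.IsRestricted 1)
    (hP1 : IsDominantIndex (r ^ ·) (P.coeff 1) m)
    (hP0 : CoeffsBoundedBy (r ^ ·) (‖coeff m (P.coeff 1)‖ * C) (P.coeff 0))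
    (hP2 : ∀ k, CoeffsBoundedBy (r ^ ·) B (P.coeff (k + 2)))
    (huC : CoeffsBoundedBy 1 C u) (hCr : C * r ≤ 1)
    (hBC : B * (C * r ^ 2) ≤ ‖coeff m (P.coeff 1)‖) : CoeffsBoundedBy (r ^ ·) C u := by
  have hcap (k n : ℕ) : cappedPow r k n ≤ r ^ n := cappedPow_le_pow hr k n
  suffices hall : ∀ k, CoeffsBoundedBy (cappedPow r k) C u by
    intro n
    simpa only [cappedPow, min_self] using hall n n
  intro k
  induction k with
  | zero => exact huC.of_weight_le fun n => (by simp [cappedPow])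
  | succ k ih =>
    have hw := isWeight_cappedPow hr (k + 1)
    have hu' : Tendsto (fun n => ‖coeff n u‖ * cappedPow r (k + 1) n) atTop (𝓝 0) := by
      refine squeeze_zero (fun n => mul_nonneg (norm_nonneg _) (hw.pos n).le)
        (fun n => mul_le_mul_of_nonneg_left (cappedPow_le_pow_cap hr (k + 1) n) (norm_nonneg _)) ?_
      simpa using ((isRestricted_iff' 1 u).1 hu).mul_const (r ^ (k + 1))
    have hloss : CoeffsBoundedBy (cappedPow r (k + 1)) (C * r) u := fun n => by
      calc ‖coeff n u‖ * cappedPow r (k + 1) n ≤ ‖coeff n u‖ * (cappedPow r k n * r) := by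
            gcongr
            exact cappedPow_succ_le hr k n
        _ = ‖coeff n u‖ * cappedPow r k n * r := (mul_assoc ..).symm
        _ ≤ C * r := by
          gcongr
          exact ih n
    have hP1' : IsDominantIndex (cappedPow r (k + 1)) (P.coeff 1) m :=
      ⟨hP1.coeff_ne_zero, hP1.norm_coeff_le, fun i hi =>
        (mul_le_mul_of_nonneg_left (hcap _ i) (norm_nonneg _)).trans_lt
          (hP1.norm_coeff_mul_lt i hi)⟩
    refine .of_eval_eq_zero hw hPu hu' hP1' (hP0.of_weight_le (hcap _))
      (fun j => (hP2 j).of_weight_le (hcap _)) hloss hCr ?_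
    calc B * (C * r) ^ 2 = B * (C * r ^ 2) * C := by ring
      _ ≤ ‖coeff m (P.coeff 1)‖ * C :=
        mul_le_mul_of_nonneg_right hBC (ih.nonneg (isWeight_cappedPow hr k))

lemma exists_geometric_bound_of_dominant_coeff_one {P : K[X][X]} {u : K⟦X⟧} {B C : ℝ} {m : ℕ}
    (hu : u.IsRestricted 1) (hPu : Polynomial.aeval u P = 0) (huC : CoeffsBoundedBy 1 C u)
    (hC : C < 1) (hBC : B * C < ‖(P.coeff 1).coeff m‖)
    (hP : ∀ k l, ‖(P.coeff k).coeff l‖ < B)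
    (hP0 : ∀ l, ‖(P.coeff 0).coeff l‖ < ‖(P.coeff 1).coeff m‖ * C)
    (hP1_le : ∀ l, ‖(P.coeff 1).coeff l‖ ≤ ‖(P.coeff 1).coeff m‖)
    (hP1_lt : ∀ l, m < l → ‖(P.coeff 1).coeff l‖ < ‖(P.coeff 1).coeff m‖) :
    ∃ r > 1, CoeffsBoundedBy (r ^ ·) C u := by
  have hm : (P.coeff 1).coeff m ≠ 0 := fun hm => by
    have := (norm_nonneg _).trans_lt (hP0 0)
    simp [hm] at this
  have hCr : ∀ᶠ r in 𝓝 (1 : ℝ), C * r < 1 :=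
    (by fun_prop : Continuous fun r : ℝ => C * r).continuousAt.eventually_lt_const (by simpa)
  have hBCr : ∀ᶠ r in 𝓝 (1 : ℝ), B * (C * r ^ 2) < ‖(P.coeff 1).coeff m‖ :=
    (by fun_prop : Continuous fun r : ℝ => B * (C * r ^ 2)).continuousAt.eventually_lt_const
      (by simpa)
  have hP0r := eventually_forall_norm_coeff_mul_pow_lt (P.coeff 0) (s := Set.univ)
    fun l _ => hP0 l
  have hP1r := eventually_forall_norm_coeff_mul_pow_lt (P.coeff 1) (s := Set.Ioi m) hP1_lt
  have hPr := eventually_forall_norm_coeff_coeff_mul_pow_lt hP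
  obtain ⟨r, hr, hCr, hBCr, hP0r, hP1r, hPr⟩ := ((frequently_gt_nhds (1 : ℝ)).and_eventually
    (hCr.and (hBCr.and (hP0r.and (hP1r.and hPr))))).exists
  rw [← Polynomial.eval_map_algebraMap] at hPu
  refine ⟨r, hr, .geometric_of_eval_eq_zero (le_of_lt hr) hPu hu (m := m) (B := B) ⟨?_, ?_, ?_⟩
    ?_ ?_ huC hCr.le ?_⟩ <;>
  simp only [CoeffsBoundedBy, Polynomial.coeff_map, coeff_algebraMap_polynomial]
  · exact hm
  · exact fun l _ => hP1_le l
  · exact hP1r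
  · exact fun l => (hP0r l (Set.mem_univ l)).le
  · exact fun k l => (hPr (k + 2) l).le
  · exact hBCr.le

theorem exists_geometric_bound_of_small_root {P : K[X][X]} {u : K⟦X⟧} {B C : ℝ} {i : ℕ}
    (hu : u.IsRestricted 1) (hPu : Polynomial.aeval u P = 0) (huC : CoeffsBoundedBy 1 C u)
    (hP : ∀ k l, ‖(P.coeff k).coeff l‖ < B) (hi : B * C < ‖(P.coeff 1).coeff i‖) :
    ∃ r > 1, ∃ D, CoeffsBoundedBy (r ^ ·) D u := by
  have hB : 0 < B := (norm_nonneg _).trans_lt (hP 0 0)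
  have hC : 0 ≤ C := huC.nonneg isWeight_one
  have hP1_tendsto : Tendsto (fun j => ‖(P.coeff 1).coeff j‖) atTop (𝓝 0) := by
    simpa using (isRestricted_iff' 1 _).1 (isRestricted_coe_polynomial 1 (P.coeff 1))
  obtain ⟨m, hle, hlt⟩ := exists_last_max hP1_tendsto ((mul_nonneg hB.le hC).trans_lt hi)
  have hBC : B * C < ‖(P.coeff 1).coeff m‖ := hi.trans_le (hle i)
  have hm : 0 < ‖(P.coeff 1).coeff m‖ := (mul_nonneg hB.le hC).trans_lt hBC
  obtain ⟨D, hCD, hDm⟩ := exists_between ((lt_div_iff₀' hB).2 hBC)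
  have hD : D < 1 := hDm.trans ((div_lt_one hB).2 (hP 1 m))
  have hP0 : CoeffsBoundedBy 1 (‖(P.coeff 1).coeff m‖ * C)
      ((P.map (algebraMap K[X] K⟦X⟧)).coeff 0) := by
    rw [← Polynomial.eval_map_algebraMap] at hPu
    refine .coeff_zero_of_eval_eq_zero (B := B) isWeight_one hPu (fun j => ?_) (fun k j => ?_) huC
      (hCD.trans hD).le hBC.le
    · simpa [coeff_algebraMap_polynomial] using hle j
    · simpa [coeff_algebraMap_polynomial] using (hP _ j).le
  obtain ⟨r, hr, hur⟩ := exists_geometric_bound_of_dominant_coeff_one hu hPu (huC.mono hCD.le) hD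
    ((lt_div_iff₀' hB).1 hDm) hP
    (fun j => lt_of_le_of_lt (by simpa [coeff_algebraMap_polynomial] using hP0 j)
      (mul_lt_mul_of_pos_left hCD hm)) hle hlt
  exact ⟨r, hr, D, hur⟩

lemma exists_isRestricted_of_taylor_shift {F : K[X][X]} {s : K⟦X⟧} {t : K[X]} {B C : ℝ} {i : ℕ}
    (hs : s.IsRestricted 1) (hF : Polynomial.aeval s F = 0)
    (hst : CoeffsBoundedBy 1 C (s - (t : K⟦X⟧)))
    (hB : ∀ k l, ‖((Polynomial.taylor t F).coeff k).coeff l‖ < B)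
    (hi : B * C < ‖((Polynomial.taylor t F).coeff 1).coeff i‖) :
    ∃ r > 1, s.IsRestricted r := by
  have hroot : Polynomial.aeval (s - (t : K⟦X⟧)) (Polynomial.taylor t F) = 0 := by
    rw [← Polynomial.eval_map_algebraMap, Polynomial.map_taylor, algebraMap_polynomial_apply,
      Polynomial.taylor_eval, sub_add_cancel, Polynomial.eval_map_algebraMap, hF]
  have hdiff : (s - (t : K⟦X⟧)).IsRestricted 1 := by
    rw [sub_eq_add_neg]
    exact isRestricted.add 1 hs (isRestricted.neg 1 (isRestricted_coe_polynomial 1 t))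
  obtain ⟨r, hr, D, hD⟩ := exists_geometric_bound_of_small_root hdiff hroot hst hB hi
  obtain ⟨c, hc, hcr⟩ := exists_between hr
  refine ⟨c, hc, ?_⟩
  rw [← sub_add_cancel s (t : K⟦X⟧)]
  exact isRestricted.add c (hD.isRestricted (one_pos.trans hc).le hcr)
    (isRestricted_coe_polynomial c t)

theorem exists_isRestricted_of_simple_root {F : K[X][X]} {s : K⟦X⟧} (hs : s.IsRestricted 1)
    (hF : Polynomial.aeval s F = 0) (hF' : Polynomial.aeval s F.derivative ≠ 0) :
    ∃ r > 1, s.IsRestricted r := by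
  set G := F.map (algebraMap K[X] K⟦X⟧) with hG
  obtain ⟨i, hi⟩ : ∃ i, coeff i (G.derivative.eval s) ≠ 0 := by
    rw [hG, Polynomial.derivative_map, Polynomial.eval_map_algebraMap]
    exact exists_coeff_ne_zero_iff_ne_zero.2 hF'
  obtain ⟨T, hT_one, hT⟩ := exists_coeffsBoundedBy_one hs
  obtain ⟨B, hB⟩ := exists_forall_norm_coeff_coeff_le F
  have hG_le (k : ℕ) : CoeffsBoundedBy 1 B (G.coeff k) := fun l => by
    simpa [hG, coeff_algebraMap_polynomial] using hB k l
  set M := B * T ^ G.natDegree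
  have hM : 0 < M + 1 := by
    have := (hG_le 0).nonneg isWeight_one
    positivity
  obtain ⟨ε, hε, hε_lt⟩ := exists_between (lt_min one_pos (div_pos (norm_pos_iff.2 hi) hM))
  obtain ⟨hε_one, hε_i⟩ := lt_min_iff.1 hε_lt
  obtain ⟨t, hst⟩ := exists_polynomial_coeffsBoundedBy_sub hs hε
  have ht : CoeffsBoundedBy 1 T (t : K⟦X⟧) := by
    rw [← sub_sub_cancel s (t : K⟦X⟧), sub_eq_add_neg]
    exact hT.add isWeight_one (hst.mono (hε_one.le.trans hT_one)).neg
  refine exists_isRestricted_of_taylor_shift (B := M + 1) (i := i) hs hF hst (fun k l => ?_) ?_ <;>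
  rw [← coeff_coeff_taylor_map_algebraMap]
  · have htaylor := ht.taylor isWeight_one hG_le hT_one k l
    rw [Pi.one_apply, mul_one] at htaylor
    exact htaylor.trans_lt (lt_add_one M)
  · rw [Polynomial.taylor_coeff_one]
    refine ht.lt_norm_coeff_eval_derivative hG_le hT_one hst hε_one.le ?_ ?_
    · exact mul_le_mul_of_nonneg_right (le_add_of_nonneg_right zero_le_one) hε.le
    · rwa [add_sub_cancel, ← lt_div_iff₀' hM]

theorem exists_isRestricted_of_aeval_eq_zero {F : K[X][X]} {s : K⟦X⟧} (hs : s.IsRestricted 1)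
    (hF_ne : F ≠ 0) (hF : Polynomial.aeval s F = 0) : ∃ r > 1, s.IsRestricted r := by
  induction hd : F.natDegree using Nat.strong_induction_on generalizing F s with
  | _ d ih =>
  have hdeg : F.natDegree ≠ 0 := fun hconst => by
    obtain ⟨f, rfl⟩ := Polynomial.natDegree_eq_zero.1 hconst
    rw [Polynomial.aeval_C, algebraMap_apply'] at hF
    refine hF_ne (Polynomial.C_eq_zero.2 (Polynomial.coe_injective K ?_))
    simpa using hF
  rcases ne_or_eq F.derivative 0 with hF' | hF'
  · rcases eq_or_ne (Polynomial.aeval s F.derivative) 0 with hroot | hsimple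
    · exact ih _ (hd ▸ Polynomial.natDegree_derivative_lt hdeg) hs hF' hroot rfl
    · exact exists_isRestricted_of_simple_root hs hF hsimple
  · obtain ⟨p, _⟩ := ExpChar.exists K
    have : ExpChar K[X] p := expChar_of_injective_algebraMap Polynomial.C_injective p
    have hexpand : Polynomial.expand K[X] p (F.contract p) = F := Polynomial.expand_contract' p hF'
    have hspow : (s ^ p).IsRestricted 1 := pow_mem (S := IsRestricted.subring 1) hs p
    obtain ⟨r, hr, hsr⟩ := ih _ (hd ▸ natDegree_contract_lt_of_derivative_eq_zero p hdeg hF') hspow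
      (fun hzero => hF_ne (by rw [← hexpand, hzero, map_zero]))
      (by rw [← Polynomial.expand_aeval, hexpand, hF]) rfl
    exact ⟨r, hr, isRestricted_of_pow_expChar p (zero_le_one.trans hr.le) hsr⟩

theorem stmt_1_general {s : K⟦X⟧} (hs : s.IsRestricted 1) (hs' : ∀ r > 1, ¬ s.IsRestricted r) :
    Transcendental K[X] s := by
  rintro ⟨F, hF_ne, hF⟩
  obtain ⟨r, hr, hsr⟩ := exists_isRestricted_of_aeval_eq_zero hs hF_ne hF
  exact hs' r hr hsr

end NormedField

/-- A transcendence criterion: a `p`-adic power series converging on the closed unit disk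
but on no larger disk is transcendental over `ℚ_p(x)`. -/
theorem stmt_1 (p : ℕ) [Fact p.Prime] (a : ℕ → ℚ_[p])
    (h0 : Tendsto (fun n => ‖a n‖) atTop (nhds 0))
    (h1 : ∀ r : ℝ, 1 < r → ¬ Tendsto (fun n => ‖a n‖ * r ^ n) atTop (nhds 0)) :
    ∀ F : Polynomial (Polynomial ℚ_[p]), F ≠ 0 →
      Polynomial.eval₂ Polynomial.coeToPowerSeries.ringHom (PowerSeries.mk a) F ≠ 0 := by
  have hmap : algebraMap ℚ_[p][X] ℚ_[p]⟦X⟧ = Polynomial.coeToPowerSeries.ringHom :=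
    RingHom.ext algebraMap_polynomial_apply
  have htranscendental : Transcendental ℚ_[p][X] (PowerSeries.mk a) :=
    stmt_1_general ((isRestricted_iff' 1 _).2 (by simpa using h0)) fun r hr hres =>
      h1 r hr (by simpa using (isRestricted_iff' r _).1 hres)
  intro F hF_ne hF
  exact htranscendental ⟨F, hF_ne, by rw [Polynomial.aeval_def, hmap, hF]⟩
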